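/- Let β > 0. For all integers j ≥ 1, ℓ ≥ 1 and all 0 ≤ t₀ ≤ t, if j ≤ e^{-2βt-6}·ℓ, then Σ_{k=1}^{ℓ} I^k_{j+ℓ−k}(t₀) · I^{ℓ−k}_j(t−t₀) ≤ e^{2βt+7} · exp(−e^{-2βt−7}·ℓ). -/

import Mathlib

/-!
`I^ℓ_j(t)` is the probability that a Yule process of rate `β` started from `j` individuals has at
least `j + ℓ` individuals at time `t`: conditioning on the first split gives
`I^{ℓ+1}_j(t) = ∫₀^t β j e^{-β j (t-s)} I^ℓ_{j+1}(s) ds`. Writing `G_r(t) = (1-r)/(1-r e^{βt})` for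
the generating function at `1/(1-r)` of the number of descendants of one individual, induction on
this recursion yields the Chernoff bound `I^ℓ_j(t) ≤ (1-r)^ℓ G_r(t)^j`. The identity
`G_r(s) G_{r e^{βs}}(t) = G_r(s+t)` then shows that each of the `ℓ` terms of the convolution obeys
the same bound at the total time, and `r = e^{-βt}/2` gives the claim.
-/

open MeasureTheory

/-- The nested integral `∫₀^t ∫₀^{s_ℓ} ⋯ ∫₀^{s_2} e^{-β(s_2+⋯+s_ℓ)} e^{a s_1} ds_1 ⋯ ds_ℓ`,
defined recursively in the number `ℓ` of integrations. -/
noncomputable def nestInt (β a : ℝ) : ℕ → ℝ → ℝ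
  | 0, _ => 1
  | 1, t => ∫ s in (0:ℝ)..t, Real.exp (a * s)
  | (n + 2), t => ∫ s in (0:ℝ)..t, Real.exp (-β * s) * nestInt β a (n + 1) s

/-- The iterated exponential integral
`I^ℓ_j(t) = β^ℓ ((j+ℓ-1)!/(j-1)!) e^{-βjt} ∫₀^t ∫₀^{s_ℓ} ⋯ ∫₀^{s_2}
e^{-β(s_2+⋯+s_ℓ)} e^{β(j+ℓ-1)s_1} ds_1 ⋯ ds_ℓ`, with `I^0_j(t) = 1`. -/
noncomputable def Iex (β : ℝ) (j ℓ : ℕ) (t : ℝ) : ℝ :=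
  if ℓ = 0 then 1
  else β ^ ℓ * ((Nat.factorial (j + ℓ - 1) : ℝ) / (Nat.factorial (j - 1) : ℝ)) *
    Real.exp (-(β * j * t)) * nestInt β (β * ((j : ℝ) + (ℓ : ℝ) - 1)) ℓ t

lemma continuous_nestInt (β a : ℝ) : ∀ n, Continuous (nestInt β a n)
  | 0 => continuous_const
  | 1 => intervalIntegral.continuous_primitive
      (fun _ _ => Continuous.intervalIntegrable (by fun_prop) _ _) 0
  | n + 2 => by
    have ih := continuous_nestInt β a (n + 1)
    exact intervalIntegral.continuous_primitive
      (fun _ _ => Continuous.intervalIntegrable (by fun_prop) _ _) 0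

lemma nestInt_nonneg (β a : ℝ) : ∀ n {t : ℝ}, 0 ≤ t → 0 ≤ nestInt β a n t
  | 0, _, _ => zero_le_one
  | 1, _, ht => intervalIntegral.integral_nonneg ht fun _ _ => (Real.exp_pos _).le
  | n + 2, _, ht => intervalIntegral.integral_nonneg ht fun _ hs =>
      mul_nonneg (Real.exp_pos _).le (nestInt_nonneg β a (n + 1) hs.1)

lemma continuous_Iex (β : ℝ) (j n : ℕ) : Continuous (Iex β j n) := by
  have := continuous_nestInt β (β * ((j : ℝ) + (n : ℝ) - 1)) n
  unfold Iex
  split_ifs <;> fun_prop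

lemma Iex_nonneg {β : ℝ} (hβ : 0 ≤ β) (j n : ℕ) {t : ℝ} (ht : 0 ≤ t) : 0 ≤ Iex β j n t := by
  have := nestInt_nonneg β (β * ((j : ℝ) + (n : ℝ) - 1)) n ht
  unfold Iex
  split_ifs <;> positivity

lemma Iex_zero (β : ℝ) (j : ℕ) (t : ℝ) : Iex β j 0 t = 1 := if_pos rfl

lemma Iex_succ_eq_ascFactorial_mul_nestInt (β : ℝ) {j : ℕ} (hj : 1 ≤ j) (n : ℕ) (t : ℝ) :
    Iex β j (n + 1) t = β ^ (n + 1) * (j.ascFactorial (n + 1) : ℝ) *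
      Real.exp (-(β * j * t)) * nestInt β (β * (j + n)) (n + 1) t := by
  have hfac : ((j + (n + 1) - 1).factorial : ℝ) / ((j - 1).factorial : ℝ) =
      j.ascFactorial (n + 1) := by
    rw [div_eq_iff (by positivity), mul_comm, ← Nat.cast_mul,
      Nat.factorial_mul_ascFactorial' j (n + 1) hj]
  have hrate : β * ((j : ℝ) + ((n + 1 : ℕ) : ℝ) - 1) = β * (j + n) := by push_cast; ring
  rw [Iex, if_neg n.succ_ne_zero, hfac, hrate]

lemma Iex_succ (β : ℝ) {j : ℕ} (hj : 1 ≤ j) (n : ℕ) (t : ℝ) :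
    Iex β j (n + 1) t = β * j * Real.exp (-(β * j * t)) *
      ∫ s in (0 : ℝ)..t, Real.exp (β * j * s) * Iex β (j + 1) n s := by
  rw [Iex_succ_eq_ascFactorial_mul_nestInt β hj]
  cases n with
  | zero => simp [Iex_zero, nestInt, Nat.ascFactorial_succ]
  | succ n =>
    have hfac : (j.ascFactorial (n + 2) : ℝ) = j * (j + 1).ascFactorial (n + 1) := by
      exact_mod_cast (Nat.succ_ascFactorial j (n + 1)).symm
    have hrate : β * (((j + 1 : ℕ) : ℝ) + n) = β * (j + ((n + 1 : ℕ) : ℝ)) := by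
      push_cast; ring
    have hexp (s : ℝ) :
        Real.exp (β * j * s) * Real.exp (-(β * (j + 1 : ℕ) * s)) = Real.exp (-β * s) := by
      rw [← Real.exp_add]; congr 1; push_cast; ring
    have hintegrand (s : ℝ) : Real.exp (β * j * s) * Iex β (j + 1) (n + 1) s =
        β ^ (n + 1) * (j + 1).ascFactorial (n + 1) *
          (Real.exp (-β * s) * nestInt β (β * (j + ((n + 1 : ℕ) : ℝ))) (n + 1) s) := by
      rw [Iex_succ_eq_ascFactorial_mul_nestInt β j.succ_pos, hrate, ← hexp]; ring
    simp only [hintegrand, intervalIntegral.integral_const_mul, hfac, nestInt]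
    ring

/-- The function `G_r(t) = 𝔼[z ^ (N t - 1)]` at `z = 1 / (1 - r)`, where `N` is a Yule process of
rate `β` with `N 0 = 1`. It is meaningful for `r * exp (β * t) < 1`, where the expectation is
finite; in the parameter `r` the semigroup property takes the form `yuleGenFun_mul`. -/
noncomputable def yuleGenFun (β r t : ℝ) : ℝ := (1 - r) / (1 - r * Real.exp (β * t))

lemma yuleGenFun_zero {r : ℝ} (hr : r ≠ 1) (β : ℝ) : yuleGenFun β r 0 = 1 := by
  rw [yuleGenFun, mul_zero, Real.exp_zero, mul_one, div_self (sub_ne_zero.2 hr.symm)]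

lemma yuleGenFun_mul {β r s : ℝ} (hs : r * Real.exp (β * s) ≠ 1) (t : ℝ) :
    yuleGenFun β r s * yuleGenFun β (r * Real.exp (β * s)) t = yuleGenFun β r (s + t) := by
  rw [yuleGenFun, yuleGenFun, yuleGenFun, div_mul_div_cancel₀ (sub_ne_zero.2 hs.symm), mul_assoc,
    ← Real.exp_add, ← mul_add]

lemma mul_exp_le_mul_exp {β r s t : ℝ} (hβ : 0 ≤ β) (hr : 0 ≤ r) (hst : s ≤ t) :
    r * Real.exp (β * s) ≤ r * Real.exp (β * t) := by
  gcongr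

lemma le_mul_exp {β r t : ℝ} (hβ : 0 ≤ β) (hr : 0 ≤ r) (ht : 0 ≤ t) :
    r ≤ r * Real.exp (β * t) := by
  simpa using mul_exp_le_mul_exp hβ hr ht

lemma one_le_yuleGenFun {β r t : ℝ} (hβ : 0 ≤ β) (hr : 0 ≤ r) (ht : 0 ≤ t)
    (hrt : r * Real.exp (β * t) < 1) : 1 ≤ yuleGenFun β r t := by
  rw [yuleGenFun, one_le_div (by linarith)]
  linarith [le_mul_exp hβ hr ht]

lemma hasDerivAt_exp_mul_yuleGenFun_pow {β r s : ℝ} (hs : r * Real.exp (β * s) ≠ 1) (j : ℕ) :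
    HasDerivAt (fun u => (1 - r) * (Real.exp (β * u) * yuleGenFun β r u) ^ j)
      (β * j * (Real.exp (β * j * s) * yuleGenFun β r s ^ (j + 1))) s := by
  have hden : 1 - r * Real.exp (β * s) ≠ 0 := sub_ne_zero.2 hs.symm
  have hexp : HasDerivAt (fun u => Real.exp (β * u)) (Real.exp (β * s) * β) s := by
    simpa using ((hasDerivAt_id s).const_mul β).exp
  have hgen : HasDerivAt (yuleGenFun β r)
      ((1 - r) * (r * (Real.exp (β * s) * β)) / (1 - r * Real.exp (β * s)) ^ 2) s := by
    refine ((hasDerivAt_const s (1 - r)).div ((hexp.const_mul r).const_sub 1) hden).congr_deriv ?_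
    ring
  refine (((hexp.mul hgen).pow j).const_mul (1 - r)).congr_deriv ?_
  have hpow : Real.exp (β * j * s) = Real.exp (β * s) ^ j := by
    rw [← Real.exp_nat_mul]; congr 1; ring
  rw [hpow]
  cases j with
  | zero => simp
  | succ j =>
    simp only [Nat.add_sub_cancel, Pi.mul_apply, yuleGenFun, div_pow, mul_pow]
    field_simp
    ring

lemma continuousOn_yuleGenFun {β r : ℝ} {S : Set ℝ}
    (hS : ∀ s ∈ S, r * Real.exp (β * s) ≠ 1) : ContinuousOn (yuleGenFun β r) S :=
  ContinuousOn.div (by fun_prop) (by fun_prop) fun s hs => sub_ne_zero.2 (hS s hs).symm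

lemma integral_exp_mul_yuleGenFun_pow {β r t : ℝ}
    (hr : ∀ s ∈ Set.uIcc 0 t, r * Real.exp (β * s) ≠ 1) (j : ℕ) :
    β * j * ∫ s in (0 : ℝ)..t, Real.exp (β * j * s) * yuleGenFun β r s ^ (j + 1) =
      (1 - r) * ((Real.exp (β * t) * yuleGenFun β r t) ^ j - 1) := by
  have hcont := continuousOn_yuleGenFun hr
  have hr1 : r ≠ 1 := by simpa using hr 0 Set.left_mem_uIcc
  rw [← intervalIntegral.integral_const_mul, intervalIntegral.integral_eq_sub_of_hasDerivAt
    (fun s hs => hasDerivAt_exp_mul_yuleGenFun_pow (hr s hs) j)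
    (ContinuousOn.intervalIntegrable (by fun_prop)), yuleGenFun_zero hr1]
  simp only [mul_zero, Real.exp_zero, mul_one, one_pow]
  ring

lemma Iex_succ_le_of_forall_le {β r t C : ℝ} (hβ : 0 ≤ β) (ht : 0 ≤ t) (hC : 0 ≤ C) (hr1 : r ≤ 1)
    {j n : ℕ} (hj : 1 ≤ j) (hr : ∀ s ∈ Set.Icc 0 t, r * Real.exp (β * s) ≠ 1)
    (hI : ∀ s ∈ Set.Icc 0 t, Iex β (j + 1) n s ≤ C * yuleGenFun β r s ^ (j + 1)) :
    Iex β j (n + 1) t ≤ C * (1 - r) * yuleGenFun β r t ^ j := by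
  rw [← Set.uIcc_of_le ht] at hr
  have hcont := continuousOn_yuleGenFun hr
  have hcontI := continuous_Iex β (j + 1) n
  have hmono : ∫ s in (0 : ℝ)..t, Real.exp (β * j * s) * Iex β (j + 1) n s ≤
      C * ∫ s in (0 : ℝ)..t, Real.exp (β * j * s) * yuleGenFun β r s ^ (j + 1) := by
    rw [← intervalIntegral.integral_const_mul]
    refine intervalIntegral.integral_mono_on ht (Continuous.intervalIntegrable (by fun_prop) _ _)
      (ContinuousOn.intervalIntegrable (by fun_prop)) fun s hs => ?_
    rw [mul_left_comm]
    exact mul_le_mul_of_nonneg_left (hI s hs) (Real.exp_pos _).le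
  have hexp : Real.exp (-(β * j * t)) * Real.exp (β * t) ^ j = 1 := by
    rw [← Real.exp_nat_mul, ← Real.exp_add, Real.exp_eq_one_iff]; ring
  calc Iex β j (n + 1) t
      ≤ β * j * Real.exp (-(β * j * t)) *
          (C * ∫ s in (0 : ℝ)..t, Real.exp (β * j * s) * yuleGenFun β r s ^ (j + 1)) := by
        rw [Iex_succ β hj]; gcongr
    _ = Real.exp (-(β * j * t)) * C *
          (β * j * ∫ s in (0 : ℝ)..t, Real.exp (β * j * s) * yuleGenFun β r s ^ (j + 1)) := by
        ring
    _ = C * (1 - r) * (Real.exp (-(β * j * t)) * Real.exp (β * t) ^ j) * yuleGenFun β r t ^ j -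
          C * (1 - r) * Real.exp (-(β * j * t)) := by
        rw [integral_exp_mul_yuleGenFun_pow hr, mul_pow]; ring
    _ ≤ C * (1 - r) * yuleGenFun β r t ^ j := by
        rw [hexp, mul_one, sub_le_self_iff]
        exact mul_nonneg (mul_nonneg hC (sub_nonneg.2 hr1)) (Real.exp_pos _).le

lemma Iex_le_pow_mul_yuleGenFun_pow {β r t : ℝ} (hβ : 0 ≤ β) (hr : 0 ≤ r) {j : ℕ} (hj : 1 ≤ j)
    (n : ℕ) (ht : 0 ≤ t) (hrt : r * Real.exp (β * t) < 1) :
    Iex β j n t ≤ (1 - r) ^ n * yuleGenFun β r t ^ j := by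
  induction n generalizing j t with
  | zero =>
    rw [Iex_zero, pow_zero, one_mul]
    exact one_le_pow₀ (one_le_yuleGenFun hβ hr ht hrt)
  | succ n ih =>
    have hr1 : r ≤ 1 := (le_mul_exp hβ hr ht).trans hrt.le
    have hlt (s : ℝ) (hs : s ∈ Set.Icc 0 t) : r * Real.exp (β * s) < 1 :=
      (mul_exp_le_mul_exp hβ hr hs.2).trans_lt hrt
    rw [pow_succ]
    exact Iex_succ_le_of_forall_le hβ ht (pow_nonneg (sub_nonneg.2 hr1) n) hr1 hj
      (fun s hs => (hlt s hs).ne) fun s hs => ih (by omega) hs.1 (hlt s hs)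

lemma Iex_mul_Iex_le {β r s t : ℝ} (hβ : 0 ≤ β) (hr : 0 ≤ r) {j : ℕ} (hj : 1 ≤ j) (k m : ℕ)
    (hs : 0 ≤ s) (ht : 0 ≤ t) (hrst : r * Real.exp (β * (s + t)) < 1) :
    Iex β (j + m) k s * Iex β j m t ≤ (1 - r) ^ (k + m) * yuleGenFun β r (s + t) ^ j := by
  have hq_lt : r * Real.exp (β * s) < 1 :=
    (mul_exp_le_mul_exp hβ hr (le_add_of_nonneg_right ht)).trans_lt hrst
  have hcancel : yuleGenFun β r s * (1 - r * Real.exp (β * s)) = 1 - r :=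
    div_mul_cancel₀ _ (sub_ne_zero.2 hq_lt.ne')
  have hgen := yuleGenFun_mul hq_lt.ne t
  have hfirst := Iex_le_pow_mul_yuleGenFun_pow hβ hr (hj.trans (j.le_add_right m)) k hs hq_lt
  set q := r * Real.exp (β * s) with hq
  have hsecond : Iex β j m t ≤ (1 - q) ^ m * yuleGenFun β q t ^ j :=
    Iex_le_pow_mul_yuleGenFun_pow hβ (by positivity) hj m ht (by
      rwa [hq, mul_assoc, ← Real.exp_add, ← mul_add])
  calc Iex β (j + m) k s * Iex β j m t
      ≤ ((1 - r) ^ k * yuleGenFun β r s ^ (j + m)) * ((1 - q) ^ m * yuleGenFun β q t ^ j) :=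
        mul_le_mul hfirst hsecond (Iex_nonneg hβ j m ht) ((Iex_nonneg hβ _ k hs).trans hfirst)
    _ = (1 - r) ^ k * (yuleGenFun β r s * (1 - q)) ^ m *
          (yuleGenFun β r s * yuleGenFun β q t) ^ j := by
        rw [mul_pow, mul_pow, pow_add]; ring
    _ = (1 - r) ^ (k + m) * yuleGenFun β r (s + t) ^ j := by rw [hcancel, hgen, pow_add]

lemma sum_Iex_mul_Iex_le {β r t₀ t : ℝ} (hβ : 0 ≤ β) (hr : 0 ≤ r) {j : ℕ} (hj : 1 ≤ j) (ℓ : ℕ)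
    (ht₀ : 0 ≤ t₀) (ht : t₀ ≤ t) (hrt : r * Real.exp (β * t) < 1) :
    ∑ k ∈ Finset.Icc 1 ℓ, Iex β (j + ℓ - k) k t₀ * Iex β j (ℓ - k) (t - t₀) ≤
      ℓ * ((1 - r) ^ ℓ * yuleGenFun β r t ^ j) := by
  have hterm : ∀ k ∈ Finset.Icc 1 ℓ, Iex β (j + ℓ - k) k t₀ * Iex β j (ℓ - k) (t - t₀) ≤
      (1 - r) ^ ℓ * yuleGenFun β r t ^ j := by
    intro k hk
    have hkℓ : k ≤ ℓ := (Finset.mem_Icc.1 hk).2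
    rw [← add_sub_cancel t₀ t] at hrt
    simpa only [Nat.add_sub_assoc hkℓ, Nat.add_sub_cancel' hkℓ, add_sub_cancel] using
      Iex_mul_Iex_le hβ hr hj k (ℓ - k) ht₀ (sub_nonneg.2 ht) hrt
  simpa only [Nat.card_Icc, Nat.add_sub_cancel, nsmul_eq_mul] using
    Finset.sum_le_card_nsmul _ _ _ hterm

lemma le_mul_exp_div {c : ℝ} (hc : 0 < c) (x : ℝ) : x ≤ c * Real.exp (x / c) := by
  rw [← div_le_iff₀' hc]
  linarith [Real.add_one_le_exp (x / c)]

lemma yuleGenFun_le_exp_one (β t : ℝ) :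
    yuleGenFun β (1 / (2 * Real.exp (β * t))) t ≤ Real.exp 1 := by
  have hhalf : 1 / (2 * Real.exp (β * t)) * Real.exp (β * t) = 1 / 2 := by field_simp
  have hr : 0 ≤ 1 / (2 * Real.exp (β * t)) := by positivity
  rw [yuleGenFun, hhalf, div_le_iff₀ (by norm_num)]
  linarith [Real.add_one_le_exp 1]

theorem Iex_convolution_bound_general {β t₀ t : ℝ} (hβ : 0 ≤ β) {j ℓ : ℕ} (hj : 1 ≤ j)
    (ht₀ : 0 ≤ t₀) (ht : t₀ ≤ t) (hjl : (j : ℝ) ≤ ℓ / (8 * Real.exp (β * t))) :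
    ∑ k ∈ Finset.Icc 1 ℓ, Iex β (j + ℓ - k) k t₀ * Iex β j (ℓ - k) (t - t₀) ≤
      4 * Real.exp (β * t) * Real.exp (-(ℓ / (8 * Real.exp (β * t)))) := by
  have hgen := yuleGenFun_le_exp_one β t
  have hE : 1 ≤ Real.exp (β * t) := Real.one_le_exp (mul_nonneg hβ (ht₀.trans ht))
  set E := Real.exp (β * t)
  set r := 1 / (2 * E) with hr_def
  have hr : 0 ≤ r := by positivity
  have hrE : r * E < 1 := by rw [hr_def]; field_simp; norm_num
  have hr1 : r ≤ 1 := (le_mul_of_one_le_right hr hE).trans hrE.le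
  have hgen_nonneg : 0 ≤ yuleGenFun β r t :=
    zero_le_one.trans (one_le_yuleGenFun hβ hr (ht₀.trans ht) hrE)
  have hdecay : (1 - r) ^ ℓ ≤ Real.exp (-(ℓ / (2 * E))) :=
    calc (1 - r) ^ ℓ ≤ Real.exp (-r) ^ ℓ :=
          pow_le_pow_left₀ (sub_nonneg.2 hr1) (Real.one_sub_le_exp_neg r) ℓ
      _ = Real.exp (-(ℓ / (2 * E))) := by rw [← Real.exp_nat_mul, hr_def]; congr 1; ring
  have hgrowth : yuleGenFun β r t ^ j ≤ Real.exp (ℓ / (8 * E)) :=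
    calc yuleGenFun β r t ^ j ≤ Real.exp 1 ^ j := pow_le_pow_left₀ hgen_nonneg hgen j
      _ = Real.exp j := Real.exp_one_pow j
      _ ≤ Real.exp (ℓ / (8 * E)) := Real.exp_le_exp.2 hjl
  calc ∑ k ∈ Finset.Icc 1 ℓ, Iex β (j + ℓ - k) k t₀ * Iex β j (ℓ - k) (t - t₀)
      ≤ ℓ * ((1 - r) ^ ℓ * yuleGenFun β r t ^ j) := sum_Iex_mul_Iex_le hβ hr hj ℓ ht₀ ht hrE
    _ ≤ 4 * E * Real.exp (ℓ / (4 * E)) *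
          (Real.exp (-(ℓ / (2 * E))) * Real.exp (ℓ / (8 * E))) := by
        gcongr
        exact le_mul_exp_div (by positivity) _
    _ = 4 * E * Real.exp (-(ℓ / (8 * E))) := by
        rw [mul_assoc, ← Real.exp_add, ← Real.exp_add]
        congr 2
        field_simp
        ring

lemma eight_mul_exp_le_exp {x c : ℝ} (hx : 0 ≤ x) (hc : 3 ≤ c) :
    8 * Real.exp x ≤ Real.exp (2 * x + c) := by
  have htwo : (2 : ℝ) ≤ Real.exp 1 := by linarith [Real.add_one_le_exp 1]
  calc 8 * Real.exp x = 2 ^ 3 * Real.exp x := by norm_num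
    _ ≤ Real.exp 1 ^ 3 * Real.exp x := by gcongr
    _ = Real.exp (3 + x) := by rw [Real.exp_one_pow, ← Real.exp_add, Nat.cast_ofNat]
    _ ≤ Real.exp (2 * x + c) := Real.exp_le_exp.2 (by linarith)

lemma exp_mul_le_div_eight_mul_exp {x c L : ℝ} (hx : 0 ≤ x) (hc : 3 ≤ c) (hL : 0 ≤ L) :
    Real.exp (-(2 * x) - c) * L ≤ L / (8 * Real.exp x) := by
  rw [← neg_add', Real.exp_neg, inv_mul_eq_div]
  exact div_le_div_of_nonneg_left hL (by positivity) (eight_mul_exp_le_exp hx hc)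

/-- If `j ≤ e^{-2βt-6}ℓ` and `0 ≤ t₀ ≤ t`, then
`Σ_{k=1}^{ℓ} I^k_{j+ℓ−k}(t₀) I^{ℓ−k}_j(t−t₀) ≤ e^{2βt+7} exp(−e^{-2βt−7}ℓ)`. -/
theorem Iex_convolution_bound (β : ℝ) (hβ : 0 < β) (j ℓ : ℕ) (hj : 1 ≤ j) (hℓ : 1 ≤ ℓ)
    (t₀ t : ℝ) (ht₀ : 0 ≤ t₀) (ht : t₀ ≤ t)
    (hjl : (j : ℝ) ≤ Real.exp (-(2 * β * t) - 6) * (ℓ : ℝ)) :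
    ∑ k ∈ Finset.Icc 1 ℓ, Iex β (j + ℓ - k) k t₀ * Iex β j (ℓ - k) (t - t₀)
      ≤ Real.exp (2 * β * t + 7) * Real.exp (-(Real.exp (-(2 * β * t) - 7) * (ℓ : ℝ))) := by
  have hx : 0 ≤ β * t := mul_nonneg hβ.le (ht₀.trans ht)
  have hrate {c : ℝ} (hc : 3 ≤ c) := exp_mul_le_div_eight_mul_exp hx hc ℓ.cast_nonneg
  have hconst : 4 * Real.exp (β * t) ≤ Real.exp (2 * (β * t) + 7) := by
    linarith [eight_mul_exp_le_exp hx (c := 7) (by norm_num), Real.exp_pos (β * t)]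
  rw [mul_assoc] at hjl ⊢
  refine (Iex_convolution_bound_general hβ.le hj ht₀ ht
    (hjl.trans (hrate (by norm_num)))).trans ?_
  gcongr
  exact hrate (by norm_num)
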